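/- arXiv:1305.4811 — 2 statements merged into one kernel-verified Lean document; each statement's English description precedes it below -/
import Mathlib

section
/- Let K be a cochain complex of R-modules with differential d, equipped with an increasing filtration W by subcomplexes, and let f : K → K[1] be a morphism of cochain complexes such that f[1] ∘ f = 0 and f(W_m K) ⊂ (W_{m−1}K)[1] for every integer m. Then: (i) (d+f)^2 = 0, so the same graded modules with differential d+f form a cochain complex K'; (ii) every W_m K is a subcomplex of K' and the identity map gives an equality of complexes gr_m^W K' = gr_m^W K for every m; (iii) for all integers m and p, the connecting homomorphism H^p(gr_m^W K') → H^{p+1}(gr_{m−1}^W K') of the short exact sequence 0 → gr_{m−1}^W K' → W_m K'/W_{m−2}K' → gr_m^W K' → 0 equals the corresponding connecting homomorphism for (K,d) plus the map on cohomology induced by the morphism gr_m^W(f) : gr_m^W K → (gr_{m−1}^W K)[1] induced by f. -/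
/-!
Write `D = d + f`.  Expanding `D ∘ D` gives `d d + (d f + f d) + f f`, and each of the three
terms vanishes.  Since `f` lowers the filtration by one, `D` and `d` agree on `W_m` modulo
`W_{m-1}`, so they induce the same differential on `gr_m^W`.

For the connecting homomorphisms, represent a class of `H^i(gr_m^W)` by `y ∈ W_m` with
`D y ∈ W_{m-1}` (`GCplx.grMk_mem_cocycles_iff`).  Then `f y ∈ W_{m-1}`, hence also
`d y ∈ W_{m-1}`, and the three maps send the class of `y` to the classes of `D y`, `d y` and
`f y`.  The last two are themselves cocycles of `gr_{m-1}^W`, because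
`D (d y) = f (d y)` and `D (f y) = -f (d y)` both lie in `W_{m-2}`.  The asserted identity is
therefore additivity of the class map applied to `D y = d y + f y`.
-/

open scoped DirectSum TensorProduct

universe u

/-- The data of a cochain complex of `R`-modules indexed by `ℤ`: a family of modules
together with degree `+1` differentials.  The condition `d ∘ d = 0` is the predicate
`GCplx.IsComplex` below. -/
structure GCplx (R : Type u) [CommRing R] where
  X : ℤ → Type u
  [ab : ∀ i, AddCommGroup (X i)]
  [mo : ∀ i, Module R (X i)]
  d : ∀ i, X i →ₗ[R] X (i + 1)

attribute [instance] GCplx.ab GCplx.mo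

namespace GCplx

variable {R : Type u} [CommRing R]

/-- Transport along an equality of degrees. -/
def cast (K : GCplx R) {i j : ℤ} (h : i = j) : K.X i →ₗ[R] K.X j := by
  subst h; exact LinearMap.id

/-- `d ∘ d = 0`, i.e. the data is an honest cochain complex. -/
def IsComplex (K : GCplx R) : Prop := ∀ (i : ℤ) (x : K.X i), K.d (i + 1) (K.d i x) = 0

/-- A morphism of cochain complexes. -/
def IsHom (K L : GCplx R) (f : ∀ i, K.X i →ₗ[R] L.X i) : Prop :=
  ∀ (i : ℤ) (x : K.X i), f (i + 1) (K.d i x) = L.d i (f i x)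

/-- The shift `K[m]`, with `K[m]^p = K^{p+m}` and differential `(-1)^m d`. -/
def shift (K : GCplx R) (m : ℤ) : GCplx R where
  X p := K.X (p + m)
  d p := (Int.negOnePow m : ℤ) •
    (K.cast (show p + m + 1 = p + 1 + m by ring) ∘ₗ K.d (p + m))

/-- Cocycles in degree `p`. -/
def cocycles (K : GCplx R) (p : ℤ) : Submodule R (K.X p) := LinearMap.ker (K.d p)

/-- Coboundaries in degree `p`. -/
def cobounds (K : GCplx R) (p : ℤ) : Submodule R (K.X p) :=
  LinearMap.range (K.cast (show p - 1 + 1 = p by ring) ∘ₗ K.d (p - 1))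

/-- The cohomology of a complex in degree `p`: cocycles modulo coboundaries. -/
abbrev cohomology (K : GCplx R) (p : ℤ) : Type u :=
  ↥(K.cocycles p) ⧸ Submodule.comap (K.cocycles p).subtype (K.cobounds p)

/-- The cohomology class of a cocycle. -/
def cls (K : GCplx R) (p : ℤ) (x : K.X p) (hx : x ∈ K.cocycles p) : K.cohomology p :=
  Submodule.Quotient.mk ⟨x, hx⟩

/-- `H` is the map induced on cohomology by the morphism `f` (characterized on classes
of cocycles). -/
def InducesOnH {K L : GCplx R} (f : ∀ i, K.X i →ₗ[R] L.X i)
    (H : ∀ p, K.cohomology p →ₗ[R] L.cohomology p) : Prop :=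
  ∀ (p : ℤ) (x : K.X p) (hx : x ∈ K.cocycles p) (hx' : f p x ∈ L.cocycles p),
    H p (K.cls p x hx) = L.cls p (f p x) hx'

/-- `f` is a quasi-isomorphism: the induced map on cohomology is bijective in every
degree. -/
def IsQIso {K L : GCplx R} (f : ∀ i, K.X i →ₗ[R] L.X i) : Prop :=
  ∃ H : ∀ p, K.cohomology p →ₗ[R] L.cohomology p,
    InducesOnH f H ∧ ∀ p, Function.Bijective (H p)

/-- The mapping cone `C(f)`, with `C(f)^p = K^{p+1} ⊕ L^p` and
`d(x,y) = (-dx, f(x) + dy)`. -/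
def cone (K L : GCplx R) (f : ∀ i, K.X i →ₗ[R] L.X i) : GCplx R where
  X p := K.X (p + 1) × L.X p
  d p := (-(K.d (p + 1) ∘ₗ LinearMap.fst R (K.X (p + 1)) (L.X p))).prod
    (f (p + 1) ∘ₗ LinearMap.fst R (K.X (p + 1)) (L.X p)
      + L.d p ∘ₗ LinearMap.snd R (K.X (p + 1)) (L.X p))

/-- `α(f) : L → C(f)`, `y ↦ (0, y)`. -/
def coneIn (K L : GCplx R) (f : ∀ i, K.X i →ₗ[R] L.X i) (i : ℤ) :
    L.X i →ₗ[R] (cone K L f).X i :=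
  (0 : L.X i →ₗ[R] K.X (i + 1)).prod LinearMap.id

/-- `β(f) : C(f) → K[1]`, `(x,y) ↦ -x`. -/
def coneOut (K L : GCplx R) (f : ∀ i, K.X i →ₗ[R] L.X i) (i : ℤ) :
    (cone K L f).X i →ₗ[R] (shift K 1).X i :=
  -(LinearMap.fst R (K.X (i + 1)) (L.X i))

/-- For a short exact sequence `0 → K → L → M → 0`, the map `δ(f,g) : C(f) → M`,
`(x,y) ↦ g(y)`. -/
def coneProj (K L M : GCplx R) (f : ∀ i, K.X i →ₗ[R] L.X i)
    (g : ∀ i, L.X i →ₗ[R] M.X i) (i : ℤ) : (cone K L f).X i →ₗ[R] M.X i :=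
  g i ∘ₗ LinearMap.snd R (K.X (i + 1)) (L.X i)

/-- The map `ζ_m : C(f)[m] → C(f[m])`, `(x, y) ↦ ((-1)^m x, y)` in degree `p`. -/
def coneShiftIso (K L : GCplx R) (f : ∀ i, K.X i →ₗ[R] L.X i) (m p : ℤ) :
    (shift (cone K L f) m).X p →ₗ[R]
      (cone (shift K m) (shift L m) (fun i => f (i + m))).X p :=
  ((Int.negOnePow m : ℤ) •
      (K.cast (show p + m + 1 = p + 1 + m by ring) ∘ₗ
        LinearMap.fst R (K.X (p + m + 1)) (L.X (p + m)))).prod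
    (LinearMap.snd R (K.X (p + m + 1)) (L.X (p + m)))

/-- Chain homotopy between two morphisms of complexes `A → B`. -/
def Homotopic (A B : GCplx R) (a b : ∀ i, A.X i →ₗ[R] B.X i) : Prop :=
  ∃ h : ∀ i, A.X i →ₗ[R] B.X (i - 1),
    ∀ (i : ℤ) (x : A.X i),
      a i x - b i x =
        B.cast (show i - 1 + 1 = i by ring) (B.d (i - 1) (h i x))
          + B.cast (show i + 1 - 1 = i by ring) (h (i + 1) (A.d i x))

end GCplx

namespace GCplx

variable {R : Type u} [CommRing R]

/-- The graded piece `gr_m^W = W_m / W_{m-1}` of a filtered complex (with differential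
`D` preserving both `W_m` and `W_{m-1}`). -/
def grCplx (A : GCplx R) (W : ℤ → ∀ i : ℤ, Submodule R (A.X i))
    (D : ∀ i, A.X i →ₗ[R] A.X (i + 1)) (m : ℤ)
    (hD : ∀ (i : ℤ) (x : A.X i), x ∈ W m i → D i x ∈ W m (i + 1))
    (hD' : ∀ (i : ℤ) (x : A.X i), x ∈ W (m - 1) i → D i x ∈ W (m - 1) (i + 1)) :
    GCplx R where
  X i := ↥(W m i) ⧸ Submodule.comap (W m i).subtype (W (m - 1) i)
  d i := Submodule.mapQ _ _ ((D i).restrict (fun x hx => hD i x hx))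
    (by
      intro x hx
      simp only [Submodule.mem_comap, Submodule.subtype_apply,
        LinearMap.restrict_apply] at hx ⊢
      exact hD' i x.1 hx)

/-- The class in `gr_m^W` of an element of `W_m`. -/
def grMk (A : GCplx R) (W : ℤ → ∀ i : ℤ, Submodule R (A.X i))
    (D : ∀ i, A.X i →ₗ[R] A.X (i + 1)) (m : ℤ)
    (hD : ∀ (i : ℤ) (x : A.X i), x ∈ W m i → D i x ∈ W m (i + 1))
    (hD' : ∀ (i : ℤ) (x : A.X i), x ∈ W (m - 1) i → D i x ∈ W (m - 1) (i + 1))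
    (i : ℤ) (x : A.X i) (hx : x ∈ W m i) : (grCplx A W D m hD hD').X i :=
  Submodule.Quotient.mk ⟨x, hx⟩

end GCplx

namespace GCplx

variable {R : Type u} [CommRing R]

/-- An element of `W_m` represents a cocycle of `gr_m^W` exactly when its differential drops
to `W_{m-1}`. -/
theorem grMk_mem_cocycles_iff (A : GCplx R) (W : ℤ → ∀ i : ℤ, Submodule R (A.X i))
    (D : ∀ i, A.X i →ₗ[R] A.X (i + 1)) (m : ℤ)
    (hD : ∀ (i : ℤ) (x : A.X i), x ∈ W m i → D i x ∈ W m (i + 1))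
    (hD' : ∀ (i : ℤ) (x : A.X i), x ∈ W (m - 1) i → D i x ∈ W (m - 1) (i + 1))
    (i : ℤ) (x : A.X i) (hx : x ∈ W m i) :
    grMk A W D m hD hD' i x hx ∈ (grCplx A W D m hD hD').cocycles i ↔
      D i x ∈ W (m - 1) (i + 1) :=
  Submodule.Quotient.mk_eq_zero
    (Submodule.comap (W m (i + 1)).subtype (W (m - 1) (i + 1)))
    (x := ⟨D i x, hD i x hx⟩)

end GCplx

open GCplx in
/-- Let `K` be a cochain complex with an increasing filtration `W`
by subcomplexes and `f : K → K[1]` a morphism of complexes (i.e. `f` anticommutes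
with `d`) with `f[1] ∘ f = 0` and `f(W_m K) ⊆ (W_{m-1} K)[1]`.  Then:
(i) `(d + f)^2 = 0`, so the same graded modules with differential `d + f` form a
complex `K'`; (ii) every `W_m K` is a subcomplex of `K'` and the identity gives an
equality of complexes `gr_m^W K' = gr_m^W K` (same graded pieces and equal
differentials); (iii) the connecting homomorphism (Gysin map) of
`0 → gr_{m-1}^W K' → W_m K'/W_{m-2} K' → gr_m^W K' → 0` equals the corresponding
connecting homomorphism for `(K, d)` plus the map on cohomology induced by
`gr_m^W(f) : gr_m^W K → (gr_{m-1}^W K)[1]`.  The three maps `conn'`, `conn`,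
`Hgrf` are characterized on representatives: the connecting homomorphism of a
filtered complex sends the class of a cocycle represented by `y ∈ W_m` to the class
of `D y ∈ W_{m-1}` (`D = d + f` for `K'`, `D = d` for `K`; by (ii) the graded
complexes of `K` and `K'` coincide, so all three maps live on the same cohomology
groups). -/
theorem twisted_filtered_gysin {R : Type u} [CommRing R] (K : GCplx R) (hK : K.IsComplex)
    (W : ℤ → ∀ i : ℤ, Submodule R (K.X i))
    (hWmono : ∀ (m i : ℤ), W (m - 1) i ≤ W m i)
    (hWd : ∀ (m i : ℤ) (x : K.X i), x ∈ W m i → K.d i x ∈ W m (i + 1))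
    (f : ∀ i, K.X i →ₗ[R] K.X (i + 1))
    (hfd : ∀ (i : ℤ) (x : K.X i), f (i + 1) (K.d i x) = - K.d (i + 1) (f i x))
    (hff : ∀ (i : ℤ) (x : K.X i), f (i + 1) (f i x) = 0)
    (hfW : ∀ (m i : ℤ) (x : K.X i), x ∈ W m i → f i x ∈ W (m - 1) (i + 1))
    (m : ℤ)
    -- (provable) preservation statements needed to form the graded complexes
    (hD1 : ∀ (i : ℤ) (x : K.X i), x ∈ W m i → K.d i x + f i x ∈ W m (i + 1))
    (hD2 : ∀ (i : ℤ) (x : K.X i), x ∈ W (m - 1) i → K.d i x + f i x ∈ W (m - 1) (i + 1))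
    (hD4 : ∀ (i : ℤ) (x : K.X i), x ∈ W (m - 1 - 1) i → K.d i x + f i x ∈ W (m - 1 - 1) (i + 1))
    -- the Gysin (connecting) homomorphism of the filtered complex `K' = (K, d + f)`
    (conn' : ∀ i, (grCplx K W (fun j => K.d j + f j) m hD1 hD2).cohomology i →ₗ[R]
        (grCplx K W (fun j => K.d j + f j) (m - 1) hD2 hD4).cohomology (i + 1))
    (hconn' : ∀ (i : ℤ) (y : K.X i) (hy : y ∈ W m i)
        (h1 : K.d i y + f i y ∈ W (m - 1) (i + 1))
        (hc : grMk K W (fun j => K.d j + f j) m hD1 hD2 i y hy ∈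
          (grCplx K W (fun j => K.d j + f j) m hD1 hD2).cocycles i)
        (hc' : grMk K W (fun j => K.d j + f j) (m - 1) hD2 hD4 (i + 1)
            (K.d i y + f i y) h1 ∈
          (grCplx K W (fun j => K.d j + f j) (m - 1) hD2 hD4).cocycles (i + 1)),
        conn' i ((grCplx K W (fun j => K.d j + f j) m hD1 hD2).cls i
            (grMk K W (fun j => K.d j + f j) m hD1 hD2 i y hy) hc)
          = (grCplx K W (fun j => K.d j + f j) (m - 1) hD2 hD4).cls (i + 1)
              (grMk K W (fun j => K.d j + f j) (m - 1) hD2 hD4 (i + 1)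
                (K.d i y + f i y) h1) hc')
    -- the Gysin (connecting) homomorphism of the filtered complex `(K, d)`,
    -- viewed on the same graded pieces (legitimate by (ii))
    (conn : ∀ i, (grCplx K W (fun j => K.d j + f j) m hD1 hD2).cohomology i →ₗ[R]
        (grCplx K W (fun j => K.d j + f j) (m - 1) hD2 hD4).cohomology (i + 1))
    (hconn : ∀ (i : ℤ) (y : K.X i) (hy : y ∈ W m i)
        (h1 : K.d i y ∈ W (m - 1) (i + 1))
        (hc : grMk K W (fun j => K.d j + f j) m hD1 hD2 i y hy ∈
          (grCplx K W (fun j => K.d j + f j) m hD1 hD2).cocycles i)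
        (hc' : grMk K W (fun j => K.d j + f j) (m - 1) hD2 hD4 (i + 1) (K.d i y) h1 ∈
          (grCplx K W (fun j => K.d j + f j) (m - 1) hD2 hD4).cocycles (i + 1)),
        conn i ((grCplx K W (fun j => K.d j + f j) m hD1 hD2).cls i
            (grMk K W (fun j => K.d j + f j) m hD1 hD2 i y hy) hc)
          = (grCplx K W (fun j => K.d j + f j) (m - 1) hD2 hD4).cls (i + 1)
              (grMk K W (fun j => K.d j + f j) (m - 1) hD2 hD4 (i + 1) (K.d i y) h1) hc')
    -- the map induced on cohomology by `gr_m^W(f) : gr_m^W K → (gr_{m-1}^W K)[1]`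
    (Hgrf : ∀ i, (grCplx K W (fun j => K.d j + f j) m hD1 hD2).cohomology i →ₗ[R]
        (grCplx K W (fun j => K.d j + f j) (m - 1) hD2 hD4).cohomology (i + 1))
    (hHgrf : ∀ (i : ℤ) (y : K.X i) (hy : y ∈ W m i)
        (h1 : f i y ∈ W (m - 1) (i + 1))
        (hc : grMk K W (fun j => K.d j + f j) m hD1 hD2 i y hy ∈
          (grCplx K W (fun j => K.d j + f j) m hD1 hD2).cocycles i)
        (hc' : grMk K W (fun j => K.d j + f j) (m - 1) hD2 hD4 (i + 1) (f i y) h1 ∈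
          (grCplx K W (fun j => K.d j + f j) (m - 1) hD2 hD4).cocycles (i + 1)),
        Hgrf i ((grCplx K W (fun j => K.d j + f j) m hD1 hD2).cls i
            (grMk K W (fun j => K.d j + f j) m hD1 hD2 i y hy) hc)
          = (grCplx K W (fun j => K.d j + f j) (m - 1) hD2 hD4).cls (i + 1)
              (grMk K W (fun j => K.d j + f j) (m - 1) hD2 hD4 (i + 1) (f i y) h1) hc') :
    -- (i) `(d+f)^2 = 0`
    IsComplex { K with d := fun i => K.d i + f i }
    -- (ii) each `W_{m'}` is a subcomplex of `K' = (K, d+f)` …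
    ∧ (∀ (m' i : ℤ) (x : K.X i), x ∈ W m' i → K.d i x + f i x ∈ W m' (i + 1))
    -- … and the identity is an equality of complexes `gr_m^W K' = gr_m^W K`
    ∧ (∀ (hd : ∀ (i : ℤ) (x : K.X i), x ∈ W m i → K.d i x ∈ W m (i + 1))
        (hd' : ∀ (i : ℤ) (x : K.X i), x ∈ W (m - 1) i → K.d i x ∈ W (m - 1) (i + 1))
        (i : ℤ),
        (grCplx K W (fun j => K.d j + f j) m hD1 hD2).d i
          = (grCplx K W K.d m hd hd').d i)
    -- (iii) `conn' = conn + H(gr f)`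
    ∧ (∀ i, conn' i = conn i + Hgrf i) := by
  refine ⟨fun i x => ?_, fun m' i x hx => ?_, fun hd hd' i => ?_, fun i => ?_⟩
  · change (K.d (i + 1) + f (i + 1)) ((K.d i + f i) x) = 0
    simp only [LinearMap.add_apply, map_add, hK i x, hff i x, hfd i x]
    abel
  · exact add_mem (hWd m' i x hx) (hWmono m' (i + 1) (hfW m' i x hx))
  · refine LinearMap.ext fun q => ?_
    obtain ⟨⟨x, hx⟩, rfl⟩ := Submodule.Quotient.mk_surjective _ q
    refine (Submodule.Quotient.eq
      (Submodule.comap (W m (i + 1)).subtype (W (m - 1) (i + 1)))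
      (x := ⟨K.d i x + f i x, hD1 i x hx⟩) (y := ⟨K.d i x, hd i x hx⟩)).2 ?_
    change K.d i x + f i x - K.d i x ∈ W (m - 1) (i + 1)
    rw [add_sub_cancel_left]
    exact hfW m i x hx
  · refine LinearMap.ext fun q => ?_
    obtain ⟨⟨q, hc⟩, rfl⟩ := Submodule.Quotient.mk_surjective _ q
    obtain ⟨⟨y, hy⟩, rfl⟩ := Submodule.Quotient.mk_surjective _ q
    have hDy : K.d i y + f i y ∈ W (m - 1) (i + 1) :=
      (grMk_mem_cocycles_iff K W (fun j => K.d j + f j) m hD1 hD2 i y hy).1 hc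
    have hfy : f i y ∈ W (m - 1) (i + 1) := hfW m i y hy
    have hdy : K.d i y ∈ W (m - 1) (i + 1) := by
      simpa only [add_sub_cancel_right] using sub_mem hDy hfy
    have hfdy : f (i + 1) (K.d i y) ∈ W (m - 1 - 1) (i + 1 + 1) :=
      hfW (m - 1) (i + 1) _ hdy
    have hcd : grMk K W (fun j => K.d j + f j) (m - 1) hD2 hD4 (i + 1) (K.d i y) hdy ∈
        (grCplx K W (fun j => K.d j + f j) (m - 1) hD2 hD4).cocycles (i + 1) := by
      rw [grMk_mem_cocycles_iff, LinearMap.add_apply, hK, zero_add]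
      exact hfdy
    have hcf : grMk K W (fun j => K.d j + f j) (m - 1) hD2 hD4 (i + 1) (f i y) hfy ∈
        (grCplx K W (fun j => K.d j + f j) (m - 1) hD2 hD4).cocycles (i + 1) := by
      rw [grMk_mem_cocycles_iff, LinearMap.add_apply, hff, add_zero,
        ← neg_mem_iff, ← hfd]
      exact hfdy
    -- Both class maps are quotient maps, so the class of the sum is the sum of the classes
    -- definitionally.
    exact (hconn' i y hy hDy hc (add_mem hcd hcf)).trans
      (congrArg₂ (· + ·) (hconn i y hy hdy hc hcd) (hHgrf i y hy hfy hc hcf)).symm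
end

section
/- For co-cubical complexes K and L in the category of κ-modules indexed by 𝒮⁺(Λ), the map τ = Σ_{k,l≥0} (−1)^{(p−k)l} τ_{k,l} : C(K)^p ⊗ C(L)^q → C(K⊗L)^{p+q} commutes with the differentials, i.e., τ defines a morphism of cochain complexes τ : C(K) ⊗ C(L) → C(K ⊗ L). -/
/-!
The complex `C(K) ⊗ C(L)` is generated by tensors `f ⊗ g` with `f` of bidegree `(k, p - k)` and
`g` of bidegree `(l, q - l)`, so it is enough to compare both composites there. Writing `f ∪ g` for
the unsigned product `τ_{k,l}(f ⊗ g)`, the two partial differentials satisfy Leibniz rules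
`δ(f ∪ g) = δf ∪ g + (-1)^k f ∪ δg` (`cechDelta_cup`) and
`∂(f ∪ g) = ∂f ∪ g + (-1)^{p-k} f ∪ ∂g` (`cechPartial_cup`). The second is the definition of the
differential of a tensor product. For the first, deleting the entry `i ≤ k` from a tuple changes only
its front part and deleting `i > k` only its back part; `δf ∪ g` and `(-1)^k f ∪ δg` contain one
further term each, and these cancel (`sum_split`). With the sign `(-1)^{(p-k)l}`, the
coefficients of `δf ∪ g`, `f ∪ δg`, `∂f ∪ g` and `f ∪ ∂g` in the two composites then agree
(`tau_d_tp_ι`).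

The degrees of the terms agree only propositionally. The constructions `tp`, `Tup.hd`, `Tup.tl` and
`cup` therefore take the relations between degrees as hypotheses, which removes all transports from
the statements of the Leibniz rules.
-/

open scoped DirectSum TensorProduct

universe u

namespace GCplx

variable {R : Type u} [CommRing R]

/-- The degree-`n` part of the tensor product of two complexes:
`(K ⊗ L)^n = ⊕_{p+q=n} K^p ⊗ L^q`. -/
abbrev tensorX (A B : GCplx R) (n : ℤ) : Type u :=
  ⨁ p : ℤ, (A.X p ⊗[R] B.X (n - p))

/-- The differential of the tensor product:
`d(x ⊗ y) = dx ⊗ y + (-1)^p x ⊗ dy` on the component `K^p ⊗ L^{n-p}`. -/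
noncomputable def tensorD (A B : GCplx R) (n : ℤ) : tensorX A B n →ₗ[R] tensorX A B (n + 1) :=
  DirectSum.toModule R ℤ (tensorX A B (n + 1)) fun p =>
    DirectSum.lof R ℤ (fun q => A.X q ⊗[R] B.X (n + 1 - q)) (p + 1) ∘ₗ
      TensorProduct.map (A.d p) (B.cast (show n - p = n + 1 - (p + 1) by ring))
    + (Int.negOnePow p : ℤ) •
      (DirectSum.lof R ℤ (fun q => A.X q ⊗[R] B.X (n + 1 - q)) p ∘ₗ
        TensorProduct.map LinearMap.id
          (B.cast (show n - p + 1 = n + 1 - p by ring) ∘ₗ B.d (n - p)))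

/-- The tensor product of two cochain complexes. -/
noncomputable def tensorC (A B : GCplx R) : GCplx R where
  X n := tensorX A B n
  d n := tensorD A B n

/-- The canonical isomorphism `K[a] ⊗ L[b] → (K ⊗ L)[a+b]`, given on the component
`K[a]^p ⊗ L[b]^q = K^{p+a} ⊗ L^{q+b}` by `x ⊗ y ↦ (-1)^{pb} x ⊗ y`. -/
noncomputable def tensorShiftIso (A B : GCplx R) (a b : ℤ) (n : ℤ) :
    (tensorC (shift A a) (shift B b)).X n →ₗ[R] (shift (tensorC A B) (a + b)).X n :=
  DirectSum.toModule R ℤ ((shift (tensorC A B) (a + b)).X n) fun p =>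
    (Int.negOnePow (p * b) : ℤ) •
      (DirectSum.lof R ℤ (fun q => A.X q ⊗[R] B.X (n + (a + b) - q)) (p + a) ∘ₗ
        TensorProduct.map LinearMap.id
          (B.cast (show n - p + b = n + (a + b) - (p + a) by ring)))

end GCplx

open GCplx

/-- `Λ^{k+1,∘}`: tuples of `k+1` pairwise distinct elements of `Λ`. -/
def Tup (Λ : Type u) (k : ℕ) : Type u := {f : Fin (k + 1) → Λ // Function.Injective f}

/-- Delete the `i`-th entry of a tuple. -/
def Tup.del {Λ : Type u} {k : ℕ} (mu : Tup Λ (k + 1)) (i : Fin (k + 2)) : Tup Λ k :=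
  ⟨mu.1 ∘ i.succAbove, mu.2.comp Fin.succAbove_right_injective⟩

theorem Tup.del_subset {Λ : Type u} {k : ℕ} (mu : Tup Λ (k + 1)) (i : Fin (k + 2)) :
    Set.range (mu.del i).1 ⊆ Set.range mu.1 :=
  Set.range_comp_subset_range i.succAbove mu.1

/-- A co-cubical complex indexed by the subsets of `Λ`: a covariant functor from
the poset of subsets of `Λ` (ordered by inclusion) to cochain complexes of
`R`-modules.  (Only its restriction to nonempty subsets, i.e. to `𝒮⁺(Λ)`, is ever
used: the Čech complex below only evaluates `obj` at the nonempty sets `λ̲`.)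
The functor laws and the fact that the `map`s are chain maps are the predicate
`IsCoCubical` below. -/
structure CoCubical (R : Type u) [CommRing R] (Λ : Type u) where
  obj : Set Λ → GCplx R
  map : ∀ {S T : Set Λ}, S ⊆ T → ∀ i, (obj S).X i →ₗ[R] (obj T).X i

/-- The laws of a co-cubical complex: each value is a complex, `map` is functorial,
and each `map` is a morphism of complexes. -/
def IsCoCubical {R : Type u} [CommRing R] {Λ : Type u} (K : CoCubical R Λ) : Prop :=
  (∀ S, (K.obj S).IsComplex)
  ∧ (∀ (S : Set Λ) (i : ℤ) (x : (K.obj S).X i), K.map (subset_refl S) i x = x)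
  ∧ (∀ {S T U : Set Λ} (h1 : S ⊆ T) (h2 : T ⊆ U) (i : ℤ) (x : (K.obj S).X i),
      K.map h2 i (K.map h1 i x) = K.map (h1.trans h2) i x)
  ∧ (∀ {S T : Set Λ} (h : S ⊆ T) (i : ℤ) (x : (K.obj S).X i),
      K.map h (i + 1) ((K.obj S).d i x) = (K.obj T).d i (K.map h i x))

namespace CoCubical

variable {R : Type u} [CommRing R] {Λ : Type u}

/-- The bigraded components of the Čech complex: in bidegree `(k, l)` with
`k + l = p` it is `∏_{λ ∈ Λ^{k+1,∘}} K(λ̲)^l`. -/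
abbrev cechB (K : CoCubical R Λ) (p : ℤ) (k : ℕ) : Type u :=
  ∀ lam : Tup Λ k, (K.obj (Set.range lam.1)).X (p - (k : ℤ))

/-- The total degree-`p` part of the Čech complex:
`C(K)^p = ⊕_{k+l=p} ∏_{λ ∈ Λ^{k+1,∘}} K(λ̲)^l`. -/
abbrev CechX (K : CoCubical R Λ) (p : ℤ) : Type u := ⨁ k : ℕ, cechB K p k

/-- The Čech differential `δ` in bidegree `(k, p-k)`:
`δ(f)_λ = Σ_{i=0}^{k+1} (-1)^i K(ι)(f_{λ_i})`. -/
def cechDelta (K : CoCubical R Λ) (p : ℤ) (k : ℕ) :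
    cechB K p k →ₗ[R] cechB K (p + 1) (k + 1) :=
  LinearMap.pi fun mu =>
    ∑ i : Fin (k + 2),
      ((-1 : ℤ) ^ (i : ℕ)) •
        ((K.obj (Set.range mu.1)).cast
            (show p - (k : ℤ) = p + 1 - ((k + 1 : ℕ) : ℤ) by push_cast; ring) ∘ₗ
          K.map (Tup.del_subset mu i) (p - (k : ℤ)) ∘ₗ
            LinearMap.proj (mu.del i))

/-- The internal differential `∂` in bidegree `(k, p-k)`: `∂(f)_λ = d(f_λ)`. -/
def cechPartial (K : CoCubical R Λ) (p : ℤ) (k : ℕ) :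
    cechB K p k →ₗ[R] cechB K (p + 1) k :=
  LinearMap.pi fun lam =>
    (K.obj (Set.range lam.1)).cast
        (show p - (k : ℤ) + 1 = p + 1 - (k : ℤ) by ring) ∘ₗ
      (K.obj (Set.range lam.1)).d (p - (k : ℤ)) ∘ₗ LinearMap.proj lam

/-- The total Čech-direction differential `δ`. -/
def cechDeltaTot (K : CoCubical R Λ) (p : ℤ) : CechX K p →ₗ[R] CechX K (p + 1) :=
  DirectSum.toModule R ℕ (CechX K (p + 1)) fun k =>
    DirectSum.lof R ℕ (cechB K (p + 1)) (k + 1) ∘ₗ cechDelta K p k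

/-- The total internal differential `(-1)^k ∂`. -/
def cechPartTot (K : CoCubical R Λ) (p : ℤ) : CechX K p →ₗ[R] CechX K (p + 1) :=
  DirectSum.toModule R ℕ (CechX K (p + 1)) fun k =>
    ((-1 : ℤ) ^ k) • (DirectSum.lof R ℕ (cechB K (p + 1)) k ∘ₗ cechPartial K p k)

/-- The total differential `d = δ + (-1)^k ∂` of the Čech complex. -/
def cechD (K : CoCubical R Λ) (p : ℤ) : CechX K p →ₗ[R] CechX K (p + 1) :=
  cechDeltaTot K p + cechPartTot K p

/-- The Čech complex of a co-cubical complex. -/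
def Cech (K : CoCubical R Λ) : GCplx R where
  X p := CechX K p
  d p := cechD K p

/-- A morphism of co-cubical complexes (componentwise chain maps commuting with the
structure maps). -/
def IsCoCubicalHom (K L : CoCubical R Λ)
    (φ : ∀ (S : Set Λ) (i : ℤ), (K.obj S).X i →ₗ[R] (L.obj S).X i) : Prop :=
  (∀ (S : Set Λ) (i : ℤ) (x : (K.obj S).X i),
      φ S (i + 1) ((K.obj S).d i x) = (L.obj S).d i (φ S i x))
  ∧ (∀ (S T : Set Λ) (h : S ⊆ T) (i : ℤ) (x : (K.obj S).X i),
      φ T i (K.map h i x) = L.map h i (φ S i x))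

/-- The map induced on Čech complexes by a morphism of co-cubical complexes. -/
def cechMap (K L : CoCubical R Λ)
    (φ : ∀ (S : Set Λ) (i : ℤ), (K.obj S).X i →ₗ[R] (L.obj S).X i) (p : ℤ) :
    (Cech K).X p →ₗ[R] (Cech L).X p :=
  DirectSum.toModule R ℕ (CechX L p) fun k =>
    DirectSum.lof R ℕ (cechB L p) k ∘ₗ
      LinearMap.pi fun lam => φ (Set.range lam.1) (p - (k : ℤ)) ∘ₗ LinearMap.proj lam

end CoCubical

namespace CoCubical

open GCplx

variable {R : Type u} [CommRing R] {Λ : Type u}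

/-- The co-cubical complex `K ⊗ L`, with `(K ⊗ L)(λ̲) = K(λ̲) ⊗ L(λ̲)`. -/
noncomputable def tensorCC (K L : CoCubical R Λ) : CoCubical R Λ where
  obj S := tensorC (K.obj S) (L.obj S)
  map {_S T} h i := DirectSum.toModule R ℤ (tensorX (K.obj T) (L.obj T) i) fun p =>
    DirectSum.lof R ℤ (fun q => (K.obj T).X q ⊗[R] (L.obj T).X (i - q)) p ∘ₗ
      TensorProduct.map (K.map h p) (L.map h (i - p))

/-- Bundled version of `LinearMap.pi`. -/
def piBundle {ι : Type u} {B : Type u} [AddCommGroup B] [Module R B]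
    {T : ι → Type u} [∀ ν, AddCommGroup (T ν)] [∀ ν, Module R (T ν)] :
    (∀ ν, B →ₗ[R] T ν) →ₗ[R] (B →ₗ[R] ∀ ν, T ν) where
  toFun := LinearMap.pi
  map_add' f g := by ext b ν; rfl
  map_smul' c f := by ext b ν; rfl

end CoCubical

namespace Tup

variable {Λ : Type u}

/-- `h_k(ν)`: the first `k+1` entries of a `(k+l+1)`-tuple. -/
def head (k l : ℕ) (nu : Tup Λ (k + l)) : Tup Λ k :=
  ⟨fun i => nu.1 (Fin.castLE (by omega) i), nu.2.comp (Fin.castLE_injective (by omega))⟩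

/-- `t_k(ν)`: the last `l+1` entries of a `(k+l+1)`-tuple. -/
def tail (k l : ℕ) (nu : Tup Λ (k + l)) : Tup Λ l :=
  ⟨fun i => nu.1 ⟨k + i.1, by omega⟩, fun i j h => by
    have h2 : (⟨k + i.1, by omega⟩ : Fin (k + l + 1)) = ⟨k + j.1, by omega⟩ := nu.2 h
    have h3 : k + i.1 = k + j.1 := congrArg Fin.val h2
    exact Fin.ext (by omega)⟩

theorem head_subset (k l : ℕ) (nu : Tup Λ (k + l)) :
    Set.range (head k l nu).1 ⊆ Set.range nu.1 := by
  rintro x ⟨i, rfl⟩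
  exact ⟨Fin.castLE (by omega) i, rfl⟩

theorem tail_subset (k l : ℕ) (nu : Tup Λ (k + l)) :
    Set.range (tail k l nu).1 ⊆ Set.range nu.1 := by
  rintro x ⟨i, rfl⟩
  exact ⟨⟨k + i.1, by omega⟩, rfl⟩

end Tup

namespace CoCubical

open GCplx

variable {R : Type u} [CommRing R] {Λ : Type u}

/-- The `(k,l)`-component `τ_{k,l}` of the product morphism, as a bilinear map:
`τ_{k,l}(f ⊗ g)_ν = K(ι)(f_{h_k(ν)}) ⊗ L(ι)(g_{t_k(ν)})`, together with the sign
`(-1)^{(p-k)l}` of `τ = Σ (-1)^{(p-k)l} τ_{k,l}`. -/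
noncomputable def tauBil (K L : CoCubical R Λ) (n p : ℤ) (k l : ℕ) :
    cechB K p k →ₗ[R] cechB L (n - p) l →ₗ[R] (Cech (tensorCC K L)).X n :=
  (Int.negOnePow ((p - (k : ℤ)) * (l : ℤ)) : ℤ) •
    (((piBundle (R := R)) ∘ₗ
        LinearMap.pi (fun nu : Tup Λ (k + l) =>
          ((TensorProduct.mk R ((K.obj (Set.range nu.1)).X (p - (k : ℤ)))
                ((L.obj (Set.range nu.1)).X (n - p - (l : ℤ))) ∘ₗ
              (K.map (Tup.head_subset k l nu) (p - (k : ℤ)) ∘ₗ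
                LinearMap.proj (Tup.head k l nu))).compl₂
            (L.map (Tup.tail_subset k l nu) (n - p - (l : ℤ)) ∘ₗ
              LinearMap.proj (Tup.tail k l nu))).compr₂
            (DirectSum.lof R ℤ
                (fun q => (K.obj (Set.range nu.1)).X q ⊗[R]
                  (L.obj (Set.range nu.1)).X (n - ((k + l : ℕ) : ℤ) - q)) (p - (k : ℤ)) ∘ₗ
              TensorProduct.map LinearMap.id
                ((L.obj (Set.range nu.1)).cast
                  (show n - p - (l : ℤ) = n - ((k + l : ℕ) : ℤ) - (p - (k : ℤ)) by
                    push_cast; ring))))).compr₂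
      (DirectSum.lof R ℕ (cechB (tensorCC K L) n) (k + l)))

/-- The product morphism `τ : C(K) ⊗ C(L) → C(K ⊗ L)`,
`τ = Σ_{k,l ≥ 0} (-1)^{(p-k)l} τ_{k,l}` on `C(K)^p ⊗ C(L)^q`. -/
noncomputable def tau (K L : CoCubical R Λ) (n : ℤ) :
    (tensorC (Cech K) (Cech L)).X n →ₗ[R] (Cech (tensorCC K L)).X n :=
  DirectSum.toModule R ℤ ((Cech (tensorCC K L)).X n) fun p =>
    TensorProduct.lift
      (DirectSum.toModule R ℕ (CechX L (n - p) →ₗ[R] (Cech (tensorCC K L)).X n)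
        fun k =>
          (DirectSum.toModule R ℕ (cechB K p k →ₗ[R] (Cech (tensorCC K L)).X n)
            fun l => (tauBil K L n p k l).flip).flip)

end CoCubical

/-! ### Pure tensors in the tensor product of complexes -/

namespace GCplx

variable {R : Type u} [CommRing R]

/-- The pure tensor `x ⊗ y`, bilinear in `x : A^a` and `y : B^b`, as an element of
`(A ⊗ B)^n`. The degrees only need to satisfy the equation `a + b = n`, so the same formula
makes sense for all the ways of writing a degree that occur below; `cast`s of the arguments and
of the result are absorbed into this equation. -/
noncomputable def tp (A B : GCplx R) {a b n : ℤ} (h : a + b = n) :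
    A.X a →ₗ[R] B.X b →ₗ[R] (tensorC A B).X n :=
  ((TensorProduct.mk R (A.X a) (B.X (n - a))).compl₂
      (B.cast (show b = n - a by omega))).compr₂
    (DirectSum.lof R ℤ (fun q => A.X q ⊗[R] B.X (n - q)) a)

theorem tp_cast_left (A B : GCplx R) {a a' b n : ℤ} (h : a' + b = n) (e : a = a')
    (x : A.X a) (y : B.X b) : tp A B h (A.cast e x) y = tp A B (by omega) x y := by
  subst e; rfl

theorem tp_cast_right (A B : GCplx R) {a b b' n : ℤ} (h : a + b' = n) (e : b = b')
    (x : A.X a) (y : B.X b) : tp A B h x (B.cast e y) = tp A B (by omega) x y := by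
  subst e; rfl

theorem cast_tp (A B : GCplx R) {a b n n' : ℤ} (h : a + b = n) (e : n = n')
    (x : A.X a) (y : B.X b) :
    (tensorC A B).cast e (tp A B h x y) = tp A B (h.trans e) x y := by
  subst e; rfl

theorem tp_apply (A B : GCplx R) {a n : ℤ} (h : a + (n - a) = n) (x : A.X a)
    (y : B.X (n - a)) :
    tp A B h x y = DirectSum.lof R ℤ (fun q => A.X q ⊗[R] B.X (n - q)) a (x ⊗ₜ y) := rfl

theorem d_tp (A B : GCplx R) {a b n : ℤ} (h : a + b = n) (x : A.X a) (y : B.X b) :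
    (tensorC A B).d n (tp A B h x y) =
      tp A B (by omega) (A.d a x) y + (Int.negOnePow a : ℤ) • tp A B (by omega) x (B.d b y) := by
  obtain rfl : b = n - a := by omega
  rw [tp_apply]
  change tensorD A B n _ = _
  rw [tensorD, DirectSum.toModule_lof]
  rfl

theorem tensor_hom_ext {A B : GCplx R} {n : ℤ} {M : Type u} [AddCommGroup M] [Module R M]
    {φ ψ : (tensorC A B).X n →ₗ[R] M}
    (H : ∀ (a b : ℤ) (h : a + b = n) (x : A.X a) (y : B.X b),
      φ (tp A B h x y) = ψ (tp A B h x y)) : φ = ψ := by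
  refine DirectSum.linearMap_ext R fun a => TensorProduct.ext' fun x y => ?_
  exact H a (n - a) (by omega) x y

end GCplx

/-! ### Front and back parts of tuples and their faces -/

namespace Tup
variable {Λ : Type u}

/-- The first `k + 1` entries of an `(m + 1)`-tuple, where `m = k + l`. Unlike in
`Tup.head`, the length is a variable, so that `(k + 1) + l` and `k + (l + 1)` can both serve as
decompositions of the same `m + 1`. -/
def hd {k l m : ℕ} (h : m = k + l) (nu : Tup Λ m) : Tup Λ k :=
  ⟨fun i => nu.1 (Fin.castLE (by omega) i), nu.2.comp (Fin.castLE_injective (by omega))⟩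

/-- The last `l + 1` entries of an `(m + 1)`-tuple, where `m = k + l`; compare `Tup.hd`. -/
def tl {k l m : ℕ} (h : m = k + l) (nu : Tup Λ m) : Tup Λ l :=
  ⟨fun i => nu.1 ⟨k + i.1, by omega⟩, fun i j e => by
    have := congrArg Fin.val (nu.2 e)
    exact Fin.ext (by simpa using this)⟩

theorem hd_subset {k l m : ℕ} (h : m = k + l) (nu : Tup Λ m) :
    Set.range (hd h nu).1 ⊆ Set.range nu.1 := by
  rintro x ⟨i, rfl⟩
  exact ⟨Fin.castLE (by omega) i, rfl⟩

theorem tl_subset {k l m : ℕ} (h : m = k + l) (nu : Tup Λ m) :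
    Set.range (tl h nu).1 ⊆ Set.range nu.1 := by
  rintro x ⟨i, rfl⟩
  exact ⟨⟨k + i.1, by omega⟩, rfl⟩

theorem hd_del_of_le {k l m : ℕ} (h : m = k + l) (nu : Tup Λ (m + 1)) (i : Fin (m + 2))
    (j : Fin (k + 2)) (e : i.1 = j.1) :
    hd h (nu.del i) = (hd (show m + 1 = (k + 1) + l by omega) nu).del j := by
  refine Subtype.ext (funext fun t => congrArg nu.1 (Fin.ext ?_))
  simp only [Fin.succAbove, Fin.lt_def, Fin.val_castLE, Fin.val_castSucc]
  split_ifs <;> simp_all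

theorem tl_del_of_le {k l m : ℕ} (h : m = k + l) (nu : Tup Λ (m + 1)) (i : Fin (m + 2))
    (e : i.1 ≤ k) :
    tl h (nu.del i) = tl (show m + 1 = (k + 1) + l by omega) nu := by
  refine Subtype.ext (funext fun t => congrArg nu.1 (Fin.ext ?_))
  simp only [Fin.succAbove, Fin.lt_def, Fin.val_castSucc]
  split_ifs <;> simp <;> omega

theorem hd_del_of_lt {k l m : ℕ} (h : m = k + l) (nu : Tup Λ (m + 1)) (i : Fin (m + 2))
    (e : k < i.1) :
    hd h (nu.del i) = hd (show m + 1 = k + (l + 1) by omega) nu := by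
  refine Subtype.ext (funext fun t => congrArg nu.1 (Fin.ext ?_))
  simp only [Fin.succAbove, Fin.lt_def, Fin.val_castLE, Fin.val_castSucc]
  have := t.2
  split_ifs
  · simp
  · omega

theorem tl_del_of_ge {k l m : ℕ} (h : m = k + l) (nu : Tup Λ (m + 1)) (i : Fin (m + 2))
    (j : Fin (l + 2)) (e : i.1 = k + j.1) :
    tl h (nu.del i) = (tl (show m + 1 = k + (l + 1) by omega) nu).del j := by
  refine Subtype.ext (funext fun t => congrArg nu.1 (Fin.ext ?_))
  simp only [Fin.succAbove, Fin.lt_def, Fin.val_castSucc]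
  split_ifs <;> simp <;> omega

/-- The last face of the front part `h_{k+1}(ν)` is `h_k(ν)`; by `tl_del_zero`, the zeroth face
of the back part `t_k(ν)` is `t_{k+1}(ν)`. Hence the two extra terms in `cechDelta_cup` cancel. -/
theorem hd_del_last {k l m : ℕ} (h : m = k + l) (nu : Tup Λ (m + 1)) :
    (hd (show m + 1 = (k + 1) + l by omega) nu).del (Fin.last (k + 1)) =
      hd (show m + 1 = k + (l + 1) by omega) nu := by
  refine Subtype.ext (funext fun t => congrArg nu.1 (Fin.ext ?_))
  simp

theorem tl_del_zero {k l m : ℕ} (h : m = k + l) (nu : Tup Λ (m + 1)) :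
    (tl (show m + 1 = k + (l + 1) by omega) nu).del 0 =
      tl (show m + 1 = (k + 1) + l by omega) nu := by
  refine Subtype.ext (funext fun t => congrArg nu.1 (Fin.ext ?_))
  simp; omega

end Tup

/-! ### The product of Čech cochains -/

namespace CoCubical
open GCplx
variable {R : Type u} [CommRing R] {Λ : Type u}

theorem map_cast (K : CoCubical R Λ) {S T : Set Λ} (h : S ⊆ T) {i j : ℤ} (e : i = j)
    (x : (K.obj S).X i) :
    K.map h j ((K.obj S).cast e x) = (K.obj T).cast e (K.map h i x) := by
  subst e; rfl

/-- Values of a cochain at equal tuples lie in different types; they can be compared after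
restriction to a common larger set. -/
theorem map_congr_tup (K : CoCubical R Λ) {p : ℤ} {k : ℕ} (f : cechB K p k) {T : Set Λ}
    {s t : Tup Λ k} (e : s = t) (hs : Set.range s.1 ⊆ T) (ht : Set.range t.1 ⊆ T) :
    K.map hs (p - k) (f s) = K.map ht (p - k) (f t) := by
  subst e; rfl

theorem map_tp (K L : CoCubical R Λ) {S T : Set Λ} (h : S ⊆ T) {a b n : ℤ} (e : a + b = n)
    (x : (K.obj S).X a) (y : (L.obj S).X b) :
    (tensorCC K L).map h n (tp (K.obj S) (L.obj S) e x y) =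
      tp (K.obj T) (L.obj T) e (K.map h a x) (L.map h b y) := by
  obtain rfl : b = n - a := by omega
  change DirectSum.toModule R ℤ (tensorX (K.obj T) (L.obj T) n) _
    (DirectSum.lof R ℤ (fun q => (K.obj S).X q ⊗[R] (L.obj S).X (n - q)) a (x ⊗ₜ y)) = _
  rw [DirectSum.toModule_lof]
  rfl

/-- The unsigned product `τ_{k,l}(f ⊗ g)`, whose value at a tuple `ν` is
`K(ι)(f_{h_k(ν)}) ⊗ L(ι)(g_{t_k(ν)})`. Total degrees and tuple lengths are related by equations
rather than fixed syntactically, so that the terms of the Leibniz rule have equal types. -/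
noncomputable def cup (K L : CoCubical R Λ) {p q n : ℤ} (hn : p + q = n) {k l m : ℕ}
    (hm : m = k + l) (f : cechB K p k) (g : cechB L q l) : cechB (tensorCC K L) n m :=
  fun nu => tp (K.obj (Set.range nu.1)) (L.obj (Set.range nu.1))
    (show (p - (k : ℤ)) + (q - (l : ℤ)) = n - (m : ℤ) by subst hm; push_cast; omega)
    (K.map (Tup.hd_subset hm nu) _ (f (Tup.hd hm nu)))
    (L.map (Tup.tl_subset hm nu) _ (g (Tup.tl hm nu)))

/-- The inclusion of the summand of Čech degree `k` into the total Čech complex. -/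
def ι (K : CoCubical R Λ) (p : ℤ) (k : ℕ) : cechB K p k →ₗ[R] (Cech K).X p :=
  DirectSum.lof R ℕ (cechB K p) k

theorem Cech_d_ι (K : CoCubical R Λ) (p : ℤ) (k : ℕ) (f : cechB K p k) :
    (Cech K).d p (ι K p k f) =
      ι K (p + 1) (k + 1) (cechDelta K p k f) +
        (-1 : ℤ) ^ k • ι K (p + 1) k (cechPartial K p k f) := by
  change cechD K p (DirectSum.lof R ℕ (cechB K p) k f) = _
  rw [cechD, LinearMap.add_apply, cechDeltaTot, cechPartTot, DirectSum.toModule_lof,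
    DirectSum.toModule_lof]
  rfl

theorem Cech_hom_ext {K : CoCubical R Λ} {p : ℤ} {M : Type u} [AddCommGroup M] [Module R M]
    {φ ψ : (Cech K).X p →ₗ[R] M}
    (H : ∀ (k : ℕ) (f : cechB K p k), φ (ι K p k f) = ψ (ι K p k f)) : φ = ψ :=
  DirectSum.linearMap_ext R fun k => LinearMap.ext fun f => H k f

theorem tau_tp_ι (K L : CoCubical R Λ) {p q n : ℤ} (hn : p + q = n) {k l m : ℕ}
    (hm : m = k + l) (f : cechB K p k) (g : cechB L q l) :
    tau K L n (tp (Cech K) (Cech L) hn (ι K p k f) (ι L q l g)) =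
      (Int.negOnePow ((p - (k : ℤ)) * (l : ℤ)) : ℤ) •
        ι (tensorCC K L) n m (cup K L hn hm f g) := by
  obtain rfl : q = n - p := by omega
  subst hm
  rw [tp_apply]
  have h1 : tau K L n (DirectSum.lof R ℤ (fun q => (Cech K).X q ⊗[R] (Cech L).X (n - q)) p
      (ι K p k f ⊗ₜ ι L (n - p) l g)) = tauBil K L n p k l f g := by
    rw [tau]
    erw [DirectSum.toModule_lof]
    erw [TensorProduct.lift.tmul]
    simp only [ι]
    erw [DirectSum.toModule_lof]
    change (DirectSum.toModule R ℕ (cechB K p k →ₗ[R] (Cech (tensorCC K L)).X n)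
      (fun l => (tauBil K L n p k l).flip)) (DirectSum.lof R ℕ (cechB L (n - p)) l g) f = _
    rw [DirectSum.toModule_lof]
    rfl
  rw [h1]
  rfl

/-! ### Leibniz rules -/

/-- The Leibniz rule for the internal differential: `∂(f ∪ g) = ∂f ∪ g + (-1)^{p-k} f ∪ ∂g`. -/
theorem cechPartial_cup (K L : CoCubical R Λ) (hK : IsCoCubical K) (hL : IsCoCubical L)
    {p q n : ℤ} (hn : p + q = n) {k l m : ℕ} (hm : m = k + l)
    (f : cechB K p k) (g : cechB L q l) :
    cechPartial (tensorCC K L) n m (cup K L hn hm f g) =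
      cup K L (by omega) hm (cechPartial K p k f) g +
        (Int.negOnePow (p - k) : ℤ) • cup K L (by omega) hm f (cechPartial L q l g) := by
  funext nu
  set A := K.obj (Set.range nu.1)
  set B := L.obj (Set.range nu.1)
  have hN : (p - (k : ℤ)) + (q - (l : ℤ)) = n - (m : ℤ) := by subst hm; push_cast; omega
  change (tensorC A B).cast (show n - (m : ℤ) + 1 = n + 1 - m by ring)
      ((tensorC A B).d (n - m) (tp A B hN
        (K.map (Tup.hd_subset hm nu) (p - k) (f (Tup.hd hm nu)))
        (L.map (Tup.tl_subset hm nu) (q - l) (g (Tup.tl hm nu))))) =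
    tp A B (by omega)
        (K.map (Tup.hd_subset hm nu) (p + 1 - k) ((K.obj _).cast (by ring)
          ((K.obj _).d (p - k) (f (Tup.hd hm nu)))))
        (L.map (Tup.tl_subset hm nu) (q - l) (g (Tup.tl hm nu))) +
      (Int.negOnePow (p - k) : ℤ) • tp A B (by omega)
        (K.map (Tup.hd_subset hm nu) (p - k) (f (Tup.hd hm nu)))
        (L.map (Tup.tl_subset hm nu) (q + 1 - l) ((L.obj _).cast (by ring)
          ((L.obj _).d (q - l) (g (Tup.tl hm nu)))))
  rw [d_tp, map_add, map_zsmul, cast_tp, cast_tp, map_cast, map_cast, tp_cast_left,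
    tp_cast_right, hK.2.2.2, hL.2.2.2]

/-- The alternating sum behind the Leibniz rule for `δ`: the faces `0, …, k` of a tuple act on
its front part and the faces `k + 1, …, m + 1` on its back part. The last face `P` of the front
and the zeroth face `Q` of the back agree and occur with opposite signs. -/
theorem sum_split {V : Type*} [AddCommGroup V] {k l m : ℕ} (hm : m = k + l)
    (F : Fin (m + 2) → V) (P : Fin (k + 2) → V) (Q : Fin (l + 2) → V)
    (hP : ∀ i j, i.1 = j.1 → i.1 ≤ k → F i = P j)
    (hQ : ∀ i j, i.1 = k + j.1 → 0 < j.1 → F i = Q j)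
    (hPQ : P (Fin.last _) = Q 0) :
    ∑ i : Fin (m + 2), (-1 : ℤ) ^ (i : ℕ) • F i =
      ∑ j : Fin (k + 2), (-1 : ℤ) ^ (j : ℕ) • P j +
        (-1 : ℤ) ^ k • ∑ j : Fin (l + 2), (-1 : ℤ) ^ (j : ℕ) • Q j := by
  have e : (k + 1) + (l + 1) = m + 2 := by omega
  rw [← Equiv.sum_comp (finCongr e), Fin.sum_univ_add, Fin.sum_univ_castSucc (n := k + 1),
    Fin.sum_univ_succ (n := l + 1), hPQ, smul_add, Finset.smul_sum, add_assoc (G := V)]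
  congr 1
  · refine Finset.sum_congr rfl fun i _ => ?_
    rw [hP (finCongr e (Fin.castAdd _ i)) i.castSucc (by simp) (by simp; omega)]
    simp
  · rw [← add_assoc (G := V)]
    have : (-1 : ℤ) ^ ((Fin.last (k + 1) : Fin (k + 2)) : ℕ) • Q 0 +
        (-1 : ℤ) ^ k • (-1 : ℤ) ^ ((0 : Fin (l + 2)) : ℕ) • Q 0 = 0 := by
      simp [pow_succ]
    rw [this, zero_add]
    refine Finset.sum_congr rfl fun i _ => ?_
    rw [hQ (finCongr e (Fin.natAdd _ i)) i.succ (by simp; omega) (by simp), smul_smul,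
      ← pow_add]
    congr 2
    simp; omega

theorem cechDelta_apply (K : CoCubical R Λ) (p : ℤ) (k : ℕ) (f : cechB K p k)
    (mu : Tup Λ (k + 1)) :
    cechDelta K p k f mu = ∑ i : Fin (k + 2), (-1 : ℤ) ^ (i : ℕ) •
      (K.obj (Set.range mu.1)).cast (by push_cast; ring)
        (K.map (Tup.del_subset mu i) (p - (k : ℤ)) (f (mu.del i))) := by
  simp only [cechDelta, LinearMap.pi_apply, LinearMap.sum_apply, LinearMap.smul_apply]
  rfl

/-- The Leibniz rule for the Čech differential: `δ(f ∪ g) = δf ∪ g + (-1)^k f ∪ δg`. -/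
theorem cechDelta_cup (K L : CoCubical R Λ) (hK : IsCoCubical K) (hL : IsCoCubical L)
    {p q n : ℤ} (hn : p + q = n) {k l m : ℕ} (hm : m = k + l)
    (f : cechB K p k) (g : cechB L q l) :
    cechDelta (tensorCC K L) n m (cup K L hn hm f g) =
      cup K L (by omega) (show m + 1 = (k + 1) + l by omega) (cechDelta K p k f) g +
        (-1 : ℤ) ^ k •
          cup K L (by omega) (show m + 1 = k + (l + 1) by omega) f (cechDelta L q l g) := by
  funext nu
  -- Each side is an alternating sum of pure tensors in the complexes attached to the range of `nu`;
  -- `h1`, `h2`, `h0` put the three sums in a form to which `sum_split` applies.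
  have hd := Tup.hd_subset (show m + 1 = k + (l + 1) by omega) nu
  have tl := Tup.tl_subset (show m + 1 = (k + 1) + l by omega) nu
  have hd' := Tup.hd_subset (show m + 1 = (k + 1) + l by omega) nu
  have tl' := Tup.tl_subset (show m + 1 = k + (l + 1) by omega) nu
  have hN : (p - (k : ℤ)) + (q - (l : ℤ)) = n + 1 - ((m + 1 : ℕ) : ℤ) := by
    subst hm; push_cast; omega
  rw [cechDelta_apply, Pi.add_apply, Pi.smul_apply]
  have h1 : cup K L (show p + 1 + q = n + 1 by omega) (show m + 1 = (k + 1) + l by omega)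
      (cechDelta K p k f) g nu = ∑ j : Fin (k + 2), (-1 : ℤ) ^ (j : ℕ) •
        tp (K.obj (Set.range nu.1)) (L.obj (Set.range nu.1)) hN
          (K.map ((Tup.del_subset _ j).trans hd') _ (f ((Tup.hd _ nu).del j)))
          (L.map tl _ (g (Tup.tl _ nu))) := by
    rw [cup, cechDelta_apply, map_sum, map_sum, LinearMap.sum_apply]
    refine Finset.sum_congr rfl fun j _ => ?_
    rw [map_zsmul, map_zsmul, LinearMap.smul_apply, map_cast, tp_cast_left, hK.2.2.1]
  have h2 : cup K L (show p + (q + 1) = n + 1 by omega) (show m + 1 = k + (l + 1) by omega)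
      f (cechDelta L q l g) nu = ∑ j : Fin (l + 2), (-1 : ℤ) ^ (j : ℕ) •
        tp (K.obj (Set.range nu.1)) (L.obj (Set.range nu.1)) hN
          (K.map hd _ (f (Tup.hd _ nu)))
          (L.map ((Tup.del_subset _ j).trans tl') _ (g ((Tup.tl _ nu).del j))) := by
    rw [cup, cechDelta_apply, map_sum, map_sum]
    refine Finset.sum_congr rfl fun j _ => ?_
    rw [map_zsmul, map_zsmul, map_cast, tp_cast_right, hL.2.2.1]
  have h0 : ∀ i : Fin (m + 2), ((tensorCC K L).obj (Set.range nu.1)).cast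
        (show n - (m : ℤ) = n + 1 - ((m + 1 : ℕ) : ℤ) by push_cast; ring)
        ((tensorCC K L).map (Tup.del_subset nu i) (n - (m : ℤ))
          (cup K L hn hm f g (nu.del i))) =
      tp (K.obj (Set.range nu.1)) (L.obj (Set.range nu.1)) hN
        (K.map ((Tup.hd_subset hm (nu.del i)).trans (Tup.del_subset nu i)) _
          (f (Tup.hd hm (nu.del i))))
        (L.map ((Tup.tl_subset hm (nu.del i)).trans (Tup.del_subset nu i)) _
          (g (Tup.tl hm (nu.del i)))) := fun i => by
    rw [cup, map_tp]
    erw [cast_tp]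
    rw [hK.2.2.1, hL.2.2.1]
  rw [h1, h2]
  simp only [h0]
  refine sum_split hm _ _ _ (fun i j e hi => ?_) (fun i j e hj => ?_) ?_
  · rw [map_congr_tup K f (Tup.hd_del_of_le hm nu i j e),
      map_congr_tup L g (Tup.tl_del_of_le hm nu i hi)]
  · rw [map_congr_tup K f (Tup.hd_del_of_lt hm nu i (by omega)),
      map_congr_tup L g (Tup.tl_del_of_ge hm nu i j e)]
  · rw [map_congr_tup K f (Tup.hd_del_last hm nu), map_congr_tup L g (Tup.tl_del_zero hm nu)]

/-- Compatibility of `τ` with the differentials on generators `f ⊗ g` of pure bidegrees. -/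
theorem tau_d_tp_ι (K L : CoCubical R Λ) (hK : IsCoCubical K) (hL : IsCoCubical L)
    {p q n : ℤ} (hn : p + q = n) (k l : ℕ) (f : cechB K p k) (g : cechB L q l) :
    tau K L (n + 1) ((tensorC (Cech K) (Cech L)).d n
        (tp (Cech K) (Cech L) hn (ι K p k f) (ι L q l g))) =
      (Cech (tensorCC K L)).d n
        (tau K L n (tp (Cech K) (Cech L) hn (ι K p k f) (ι L q l g))) := by
  have hs : ∀ j : ℕ, (-1 : ℤ) ^ j = (Int.negOnePow (j : ℤ) : ℤ) := fun j => by
    simp [Int.negOnePow_def]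
  rw [d_tp, Cech_d_ι, Cech_d_ι]
  simp only [map_add, map_zsmul, LinearMap.add_apply, LinearMap.smul_apply]
  rw [tau_tp_ι K L _ (show k + l + 1 = (k + 1) + l by omega), tau_tp_ι K L _ (m := k + l) rfl,
    tau_tp_ι K L _ (show k + l + 1 = k + (l + 1) by omega), tau_tp_ι K L _ (m := k + l) rfl,
    tau_tp_ι K L _ (m := k + l) rfl, map_zsmul, Cech_d_ι, cechDelta_cup K L hK hL,
    cechPartial_cup K L hK hL]
  simp only [map_add, map_zsmul, smul_add, smul_smul, hs, ← Units.val_mul,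
    ← Int.negOnePow_add]
  have key : ∀ {a b : ℤ}, Even (a - b) → (Int.negOnePow a : ℤ) = Int.negOnePow b :=
    fun h => by rw [(Int.negOnePow_eq_iff _ _).2 h]
  have aux : ∀ {V : Type u} [AddCommGroup V] (X Y Z W : V) {a a' b b' c c' e e' : ℤ},
      a = a' → b = b' → c = c' → e = e' →
      a • X + b • Z + (c • Y + e • W) = a' • X + c' • Y + (b' • Z + e' • W) := by
    rintro V _ X Y Z W _ _ _ _ _ _ _ _ rfl rfl rfl rfl
    abel
  -- The exponents agree as polynomials except for those of `f ∪ δg`, `p + (p - k)(l + 1)` and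
  -- `(p - k)l + k`, whose difference is `2(p - k)`.
  apply aux
  · exact key ⟨0, by push_cast; ring⟩
  · exact key ⟨0, by push_cast; ring⟩
  · exact key ⟨p - k, by push_cast; ring⟩
  · exact key ⟨0, by push_cast; ring⟩

end CoCubical

open CoCubical GCplx in
/-- For co-cubical complexes `K` and `L` in the category of
`κ`-modules indexed by `𝒮⁺(Λ)` (`κ` a commutative `ℚ`-algebra), the map
`τ = Σ_{k,l≥0} (-1)^{(p-k)l} τ_{k,l} : C(K)^p ⊗ C(L)^q → C(K⊗L)^{p+q}` commutes
with the differentials, i.e. `τ` defines a morphism of cochain complexes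
`τ : C(K) ⊗ C(L) → C(K ⊗ L)`. -/
theorem tau_isHom {R Λ : Type u} [CommRing R] [Algebra ℚ R] [Nonempty Λ]
    (K L : CoCubical R Λ) (hK : IsCoCubical K) (hL : IsCoCubical L) :
    IsHom (tensorC (Cech K) (Cech L)) (Cech (tensorCC K L)) (tau K L) := by
  intro n z
  suffices h : tau K L (n + 1) ∘ₗ (tensorC (Cech K) (Cech L)).d n =
      (Cech (tensorCC K L)).d n ∘ₗ tau K L n from LinearMap.congr_fun h z
  refine tensor_hom_ext fun p q hn x y => ?_
  suffices h : (tp (Cech K) (Cech L) hn).compr₂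
        (tau K L (n + 1) ∘ₗ (tensorC (Cech K) (Cech L)).d n) =
      (tp (Cech K) (Cech L) hn).compr₂ ((Cech (tensorCC K L)).d n ∘ₗ tau K L n) from
    LinearMap.congr_fun (LinearMap.congr_fun h x) y
  refine Cech_hom_ext fun k f => Cech_hom_ext fun l g => ?_
  exact tau_d_tp_ι K L hK hL hn k l f g
end
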